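/- If (V,B) is a maximum partial triple system MMPTS(17) with leave the 4-cycle {a,b},{b,c},{c,d},{d,a}, and x is one of the four points a,b,c,d, then deleting x from V and deleting from B all triples containing x yields a maximum partial triple system MMPTS(16) on the remaining 16 points; conversely, every MMPTS(16) is isomorphic to one obtained from some MMPTS(17) in this way. -/

import Mathlib

def isPTS {α : Type*} (B : Finset (Finset α)) : Prop :=
  (∀ T ∈ B, T.card = 3) ∧
  ∀ p : Finset α, p.card = 2 → ∀ T₁ ∈ B, ∀ T₂ ∈ B, p ⊆ T₁ → p ⊆ T₂ → T₁ = T₂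

def isMMPTS {α : Type*} (B : Finset (Finset α)) : Prop :=
  isPTS B ∧ ∀ B' : Finset (Finset α), isPTS B' → B'.card ≤ B.card

def leave {α : Type*} (B : Finset (Finset α)) : Set (Finset α) :=
  {p | p.card = 2 ∧ ∀ T ∈ B, ¬ p ⊆ T}

def deletePoint {α : Type*} [DecidableEq α] (B : Finset (Finset α)) (x : α) :
    Finset (Finset {y : α // y ≠ x}) :=
  (B.filter fun T => x ∉ T).image (Finset.subtype fun y => y ≠ x)

open Finset in
theorem pts_iff {α : Type*} [DecidableEq α] (B : Finset (Finset α)) :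
    isPTS B ↔ (∀ T ∈ B, T.card = 3) ∧ ∀ u v : α, u ≠ v → ∀ T₁ ∈ B, ∀ T₂ ∈ B,
      u ∈ T₁ → v ∈ T₁ → u ∈ T₂ → v ∈ T₂ → T₁ = T₂ := by
  unfold isPTS
  refine and_congr_right fun _ => ⟨fun h u v huv T₁ h₁ T₂ h₂ a b c d => ?_, fun h p hp T₁ h₁ T₂ h₂ a b => ?_⟩
  · refine h {u, v} (card_pair huv) T₁ h₁ T₂ h₂ ?_ ?_ <;> simp [insert_subset_iff, *]
  · obtain ⟨u, v, huv, rfl⟩ := card_eq_two.1 hp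
    simp only [insert_subset_iff, singleton_subset_iff] at a b
    exact h u v huv T₁ h₁ T₂ h₂ a.1 a.2 b.1 b.2

/-- Neighbours of a point in the leave. -/
def nbr {α : Type*} [DecidableEq α] [Fintype α] (B : Finset (Finset α)) (y : α) : Finset α :=
  Finset.univ.filter fun z => z ≠ y ∧ ∀ T ∈ B, y ∈ T → z ∉ T

/-- Replication number of a point. -/
def rep {α : Type*} [DecidableEq α] (B : Finset (Finset α)) (y : α) : ℕ :=
  (B.filter fun T => y ∈ T).card

section
variable {α : Type*} [DecidableEq α] [Fintype α]

theorem mem_nbr (B : Finset (Finset α)) (y z : α) :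
    z ∈ nbr B y ↔ z ≠ y ∧ ∀ T ∈ B, y ∈ T → z ∉ T := by simp [nbr]

theorem nbr_symm (B : Finset (Finset α)) (y z : α) (h : z ∈ nbr B y) : y ∈ nbr B z := by
  rw [mem_nbr] at *
  exact ⟨h.1.symm, fun T hT h1 h2 => h.2 T hT h2 h1⟩

theorem mem_nbr_leave (B : Finset (Finset α)) (y z : α) :
    z ∈ nbr B y ↔ z ≠ y ∧ ({y, z} : Finset α) ∈ leave B := by
  rw [mem_nbr]
  refine and_congr_right fun h => ?_
  simp [leave, Finset.card_pair h.symm, Finset.insert_subset_iff]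

theorem rep_nbr (B : Finset (Finset α)) (hB : isPTS B) (y : α) :
    2 * rep B y + (nbr B y).card + 1 = Fintype.card α := by
  obtain ⟨h3, h⟩ := (pts_iff B).1 hB
  have hU : ((B.filter fun T => y ∈ T).biUnion fun T => T.erase y).card = 2 * rep B y := by
    rw [Finset.card_biUnion]
    · rw [Finset.sum_congr rfl (g := fun _ => 2)]
      · simp [rep, mul_comm]
      · intro T hT
        simp only [Finset.mem_filter] at hT
        rw [Finset.card_erase_of_mem hT.2, h3 T hT.1]
    · intro T₁ h₁ T₂ h₂ hne
      simp only [Finset.mem_coe, Finset.mem_filter] at h₁ h₂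
      show Disjoint (T₁.erase y) (T₂.erase y)
      rw [Finset.disjoint_left]
      intro z hz hz'
      simp only [Finset.mem_erase] at hz hz'
      exact hne (h y z hz.1.symm T₁ h₁.1 T₂ h₂.1 h₁.2 hz.2 h₂.2 hz'.2)
  have hE : ((B.filter fun T => y ∈ T).biUnion fun T => T.erase y) ∪ nbr B y = Finset.univ.erase y := by
    ext z
    simp only [Finset.mem_union, Finset.mem_biUnion, Finset.mem_filter, Finset.mem_erase, mem_nbr,
      Finset.mem_univ, and_true]
    constructor
    · rintro (⟨T, _, h, _⟩ | h)
      · exact h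
      · exact h.1
    · intro hz
      by_cases hc : ∃ T ∈ B, y ∈ T ∧ z ∈ T
      · obtain ⟨T, a, b, c⟩ := hc
        exact Or.inl ⟨T, ⟨a, b⟩, hz, c⟩
      · push Not at hc
        exact Or.inr ⟨hz, hc⟩
  have hD : Disjoint ((B.filter fun T => y ∈ T).biUnion fun T => T.erase y) (nbr B y) := by
    rw [Finset.disjoint_left]
    intro z hz hz'
    simp only [Finset.mem_biUnion, Finset.mem_filter, Finset.mem_erase] at hz
    obtain ⟨T, ⟨a, b⟩, c, d⟩ := hz
    exact ((mem_nbr _ _ _).1 hz').2 T a b d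
  rw [← hU, ← Finset.card_union_of_disjoint hD, hE, Finset.card_erase_add_one (Finset.mem_univ y),
    Finset.card_univ]

theorem sum_rep (B : Finset (Finset α)) (hB : isPTS B) : ∑ y, rep B y = 3 * B.card := by
  simp only [rep, Finset.card_filter]
  rw [Finset.sum_comm, Finset.sum_congr rfl (g := fun _ => 3)]
  · simp [mul_comm]
  · intro T hT
    rw [← hB.1 T hT]
    simp

theorem sum_nbr (B : Finset (Finset α)) (hB : isPTS B) :
    6 * B.card + ∑ y, (nbr B y).card + Fintype.card α = Fintype.card α * Fintype.card α := by
  have h : ∑ y : α, (2 * rep B y + (nbr B y).card + 1) = ∑ y : α, Fintype.card α :=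
    Finset.sum_congr rfl fun y _ => rep_nbr B hB y
  simp only [Finset.sum_add_distrib, ← Finset.mul_sum, sum_rep B hB] at h
  simp at h
  omega

theorem bound16 (B : Finset (Finset α)) (hB : isPTS B) (hc : Fintype.card α = 16) :
    B.card ≤ 37 := by
  have h : ∑ y : α, rep B y ≤ ∑ y : α, 7 :=
    Finset.sum_le_sum fun y _ => by have := rep_nbr B hB y; omega
  rw [sum_rep B hB] at h
  simp [hc] at h
  omega

theorem bound17 (B : Finset (Finset α)) (hB : isPTS B) (hc : Fintype.card α = 17) :
    B.card ≤ 44 := by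
  by_contra hlt
  have h := sum_nbr B hB
  rw [hc] at h
  have hs : ∑ y, (nbr B y).card = 2 := by omega
  have h0 : ∃ y, (nbr B y).card ≠ 0 := by
    by_contra! h0
    simp only [h0] at hs
    simp at hs
  obtain ⟨y, hy⟩ := h0
  obtain ⟨z, hz⟩ := Finset.card_pos.1 (Nat.pos_of_ne_zero hy)
  have hzy := ((mem_nbr _ _ _).1 hz).1
  have hz2 : (nbr B z).card ≠ 0 := (Finset.card_pos.2 ⟨y, nbr_symm _ _ _ hz⟩).ne'
  have e1 := rep_nbr B hB y
  have e2 := rep_nbr B hB z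
  have : ∑ t ∈ {y, z}, (nbr B t).card ≤ ∑ t, (nbr B t).card :=
    Finset.sum_le_sum_of_subset (Finset.subset_univ _)
  rw [Finset.sum_pair hzy.symm] at this
  omega

theorem pair_eq {a b c d : α} (h : ({a, b} : Finset α) = {c, d}) :
    (a = c ∧ b = d) ∨ (a = d ∧ b = c) := by
  have := congrArg (fun s : Finset α => (s : Set α)) h
  simp only [Finset.coe_pair] at this
  exact Set.pair_eq_pair_iff.1 this

theorem nbr_cycle (B : Finset (Finset α)) (a b c d : α) (hab : a ≠ b) (hac : a ≠ c) (had : a ≠ d)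
    (hbc : b ≠ c) (hbd : b ≠ d) (hcd : c ≠ d)
    (hl : leave B = {{a, b}, {b, c}, {c, d}, {d, a}}) (y z : α) :
    z ∈ nbr B y ↔ (y = a ∧ (z = b ∨ z = d)) ∨ (y = b ∧ (z = a ∨ z = c)) ∨
      (y = c ∧ (z = b ∨ z = d)) ∨ (y = d ∧ (z = a ∨ z = c)) := by
  rw [mem_nbr_leave, hl]
  simp only [Set.mem_insert_iff, Set.mem_singleton_iff]
  constructor
  · rintro ⟨h, h1 | h1 | h1 | h1⟩ <;> rcases pair_eq h1 with ⟨rfl, rfl⟩ | ⟨rfl, rfl⟩ <;> simp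
  · rintro (⟨rfl, rfl | rfl⟩ | ⟨rfl, rfl | rfl⟩ | ⟨rfl, rfl | rfl⟩ | ⟨rfl, rfl | rfl⟩) <;>
      simp [Finset.pair_comm, *, Ne.symm]

theorem cycle_facts (B : Finset (Finset α)) (hB : isPTS B) (hc : Fintype.card α = 17)
    (a b c d : α) (hab : a ≠ b) (hac : a ≠ c) (had : a ≠ d)
    (hbc : b ≠ c) (hbd : b ≠ d) (hcd : c ≠ d)
    (hl : leave B = {{a, b}, {b, c}, {c, d}, {d, a}}) :
    B.card = 44 ∧ ∀ x, x = a ∨ x = b ∨ x = c ∨ x = d → (nbr B x).card = 2 := by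
  have key := nbr_cycle B a b c d hab hac had hbc hbd hcd hl
  have na : nbr B a = {b, d} := by
    ext z; rw [key]; simp [*]
  have nb : nbr B b = {a, c} := by
    ext z; rw [key]; simp [*, hab.symm]
  have nc : nbr B c = {b, d} := by
    ext z; rw [key]; simp [*, hac.symm, hbc.symm]
  have nd : nbr B d = {a, c} := by
    ext z; rw [key]; simp [*, had.symm, hbd.symm, hcd.symm]
  have ca : (nbr B a).card = 2 := by rw [na, Finset.card_pair hbd]
  have cb : (nbr B b).card = 2 := by rw [nb, Finset.card_pair hac]
  have cc : (nbr B c).card = 2 := by rw [nc, Finset.card_pair hbd]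
  have cd : (nbr B d).card = 2 := by rw [nd, Finset.card_pair hac]
  refine ⟨?_, by rintro x (rfl | rfl | rfl | rfl) <;> assumption⟩
  have hs : ∑ y, (nbr B y).card = ∑ y ∈ {a, b, c, d}, (nbr B y).card := by
    symm
    apply Finset.sum_subset (Finset.subset_univ _)
    intro y _ hy
    rw [Finset.card_eq_zero, Finset.eq_empty_iff_forall_notMem]
    intro z hz
    rw [key] at hz
    simp at hy
    tauto
  rw [Finset.sum_insert (by simp [*]), Finset.sum_insert (by simp [*]),
    Finset.sum_insert (by simp [*]), Finset.sum_singleton, ca, cb, cc, cd] at hs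
  have := sum_nbr B hB
  rw [hc, hs] at this
  omega

theorem deletePoint_pts (B : Finset (Finset α)) (hB : isPTS B) (x : α) :
    isPTS (deletePoint B x) ∧ (deletePoint B x).card + rep B x = B.card := by
  obtain ⟨h3, h⟩ := (pts_iff B).1 hB
  constructor
  · rw [pts_iff]
    constructor
    · intro T hT
      simp only [deletePoint, Finset.mem_image, Finset.mem_filter] at hT
      obtain ⟨S, ⟨hS, hx⟩, rfl⟩ := hT
      rw [Finset.card_subtype, Finset.filter_true_of_mem, h3 S hS]
      rintro y hy rfl
      exact hx hy
    · intro u v huv T₁ h₁ T₂ h₂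
      simp only [deletePoint, Finset.mem_image, Finset.mem_filter] at h₁ h₂
      obtain ⟨S₁, ⟨hS₁, hx₁⟩, rfl⟩ := h₁
      obtain ⟨S₂, ⟨hS₂, hx₂⟩, rfl⟩ := h₂
      simp only [Finset.mem_subtype]
      intro a b c d
      rw [h u v (fun e => huv (Subtype.ext e)) S₁ hS₁ S₂ hS₂ a b c d]
  · rw [deletePoint, Finset.card_image_of_injOn, rep, add_comm, Finset.card_filter_add_card_filter_not]
    intro S₁ h₁ S₂ h₂ he
    simp only [Finset.coe_filter, Set.mem_setOf_eq] at h₁ h₂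
    ext y
    by_cases hy : y = x
    · subst hy; simp [h₁.2, h₂.2]
    · have := congrArg (fun s => (⟨y, hy⟩ : {y // y ≠ x}) ∈ s) he
      simpa using this

theorem mm_of_cycle (B : Finset (Finset α)) (hB : isPTS B) (hc : Fintype.card α = 17)
    (a b c d : α) (hab : a ≠ b) (hac : a ≠ c) (had : a ≠ d)
    (hbc : b ≠ c) (hbd : b ≠ d) (hcd : c ≠ d)
    (hl : leave B = {{a, b}, {b, c}, {c, d}, {d, a}}) : isMMPTS B := by
  refine ⟨hB, fun B' hB' => ?_⟩
  rw [(cycle_facts B hB hc a b c d hab hac had hbc hbd hcd hl).1]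
  exact bound17 B' hB' hc

end

/-- The triples of an explicit partial triple system on 16 points. -/
def sysL : List (Fin 16 × Fin 16 × Fin 16) :=
  [(0, 4, 6), (0, 5, 14), (0, 7, 12), (0, 8, 10), (0, 9, 15), (0, 11, 13),
   (1, 2, 8), (1, 3, 4), (1, 5, 7), (1, 6, 14), (1, 9, 12), (1, 10, 13),
   (1, 11, 15), (2, 3, 15), (2, 4, 7), (2, 5, 9), (2, 6, 13), (2, 10, 14),
   (2, 11, 12), (3, 5, 10), (3, 6, 9), (3, 7, 13), (3, 8, 11), (3, 12, 14),
   (4, 8, 13), (4, 9, 10), (4, 11, 14), (4, 12, 15), (5, 6, 11), (5, 8, 12),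
   (5, 13, 15), (6, 8, 15), (6, 10, 12), (7, 8, 14), (7, 9, 11), (7, 10, 15),
   (9, 13, 14)]

theorem sysL_nodup : sysL.Nodup := by decide +kernel

theorem sysL_lt : ∀ s ∈ sysL, s.1 < s.2.1 ∧ s.2.1 < s.2.2 := by
  have h : (sysL.all fun s => decide (s.1 < s.2.1) && decide (s.2.1 < s.2.2)) = true := by
    decide +kernel
  intro s hs
  simpa using List.all_eq_true.1 h s hs

/-- The three pairs of a triple. -/
def prs (s : Fin 16 × Fin 16 × Fin 16) : List (Fin 16 × Fin 16) :=
  [(s.1, s.2.1), (s.1, s.2.2), (s.2.1, s.2.2)]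

theorem sysL_pair : ∀ s ∈ sysL, ∀ t ∈ sysL, (∃ p ∈ prs s, p ∈ prs t) → s = t := by
  have h : (sysL.all fun s => sysL.all fun t =>
      decide (s = t) || (prs s).all fun p => !(prs t).contains p) = true := by
    decide +kernel
  rintro s hs t ht ⟨p, hp, hp'⟩
  have h1 := List.all_eq_true.1 (List.all_eq_true.1 h s hs) t ht
  rw [Bool.or_eq_true] at h1
  rcases h1 with h1 | h1
  · exact of_decide_eq_true h1
  · have h2 := List.all_eq_true.1 h1 p hp
    simp [hp'] at h2

/-- The underlying set of a triple. -/
def tset (s : Fin 16 × Fin 16 × Fin 16) : Finset (Fin 16) := {s.1, s.2.1, s.2.2}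

theorem mem_prs (s : Fin 16 × Fin 16 × Fin 16) (h : s.1 < s.2.1 ∧ s.2.1 < s.2.2) (u v : Fin 16)
    (huv : u < v) (hu : u ∈ tset s) (hv : v ∈ tset s) : (u, v) ∈ prs s := by
  obtain ⟨a, b, c⟩ := s
  simp only [tset, prs, Finset.mem_insert, Finset.mem_singleton, List.mem_cons, Prod.mk.injEq,
    List.not_mem_nil, or_false] at *
  grind

theorem tset_pair (s t : Fin 16 × Fin 16 × Fin 16) (hs : s ∈ sysL) (ht : t ∈ sysL) (u v : Fin 16)
    (huv : u ≠ v) (h1 : u ∈ tset s) (h2 : v ∈ tset s) (h3 : u ∈ tset t) (h4 : v ∈ tset t) :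
    s = t := by
  rcases lt_or_gt_of_ne huv with h | h
  · exact sysL_pair s hs t ht ⟨_, mem_prs s (sysL_lt s hs) u v h h1 h2,
      mem_prs t (sysL_lt t ht) u v h h3 h4⟩
  · exact sysL_pair s hs t ht ⟨_, mem_prs s (sysL_lt s hs) v u h h2 h1,
      mem_prs t (sysL_lt t ht) v u h h4 h3⟩

/-- An explicit partial triple system with 37 triples on 16 points. -/
def sys16 : Finset (Finset (Fin 16)) := (sysL.map tset).toFinset

theorem sys16_card : sys16.card = 37 := by
  rw [sys16, List.toFinset_card_of_nodup, List.length_map]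
  · rfl
  · refine List.Nodup.map_on (fun s hs t ht e => ?_) sysL_nodup
    refine tset_pair s t hs ht s.1 s.2.1 (sysL_lt s hs).1.ne ?_ ?_ ?_ ?_
    · simp [tset]
    · simp [tset]
    · rw [← e]; simp [tset]
    · rw [← e]; simp [tset]

theorem sys16_pts : isPTS sys16 := by
  rw [pts_iff]
  constructor
  · intro T hT
    simp only [sys16, List.mem_toFinset, List.mem_map] at hT
    obtain ⟨s, hs, rfl⟩ := hT
    have h := sysL_lt s hs
    exact Finset.card_eq_three.2 ⟨_, _, _, h.1.ne, (h.1.trans h.2).ne, h.2.ne, rfl⟩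
  · intro u v huv T₁ h₁ T₂ h₂ a b c d
    simp only [sys16, List.mem_toFinset, List.mem_map] at h₁ h₂
    obtain ⟨s, hs, rfl⟩ := h₁
    obtain ⟨t, ht, rfl⟩ := h₂
    rw [tset_pair s t hs ht u v huv a b c d]

/-- Shape of the leave of a maximum system on 16 points. -/
theorem leave16 (C : Finset (Finset (Fin 16))) (hC : isMMPTS C) :
    ∃ w p q r : Fin 16, p ≠ q ∧ p ≠ r ∧ q ≠ r ∧ nbr C w = {p, q, r} ∧
      ∀ y, y ≠ w → ∃ z, nbr C y = {z} := by
  have hcard : C.card = 37 :=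
    le_antisymm (bound16 C hC.1 (by simp)) (sys16_card.symm.le.trans (hC.2 sys16 sys16_pts))
  have hr : ∀ y, 2 * rep C y + (nbr C y).card + 1 = 16 := fun y => by
    simpa using rep_nbr C hC.1 y
  have hs : ∑ y, (7 - rep C y) = 1 := by
    have h1 : ∑ y, (7 - rep C y) + ∑ y, rep C y = ∑ y : Fin 16, 7 := by
      rw [← Finset.sum_add_distrib]
      exact Finset.sum_congr rfl fun y _ => by have := hr y; omega
    rw [sum_rep C hC.1, hcard] at h1
    simp at h1
    omega
  have hw : ∃ w, 7 - rep C w ≠ 0 := by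
    by_contra! h0
    simp only [h0] at hs
    simp at hs
  obtain ⟨w, hw⟩ := hw
  have hsplit := Finset.add_sum_erase Finset.univ (fun y => 7 - rep C y) (Finset.mem_univ w)
  simp only [hs] at hsplit
  have hw3 : (nbr C w).card = 3 := by have := hr w; omega
  obtain ⟨p, q, r, h1, h2, h3, h4⟩ := Finset.card_eq_three.1 hw3
  refine ⟨w, p, q, r, h1, h2, h3, h4, fun y hy => Finset.card_eq_one.1 ?_⟩
  have h0 : ∑ y ∈ Finset.univ.erase w, (7 - rep C y) = 0 := by omega
  have := (Finset.sum_eq_zero_iff.1 h0) y (by simp [hy])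
  have := hr y
  omega

/-- Adjoin a new point to `C` along a relation. -/
def extend17 (C : Finset (Finset (Fin 16))) (N : Finset (Fin 16 × Fin 16)) :
    Finset (Finset (Fin 17)) :=
  C.image (fun T => T.image Fin.castSucc) ∪
    N.image fun e => {Fin.last 16, e.1.castSucc, e.2.castSucc}

theorem mem_extend17 (C : Finset (Finset (Fin 16))) (N : Finset (Fin 16 × Fin 16))
    (T : Finset (Fin 17)) : T ∈ extend17 C N ↔ (∃ S ∈ C, T = S.image Fin.castSucc) ∨
      ∃ u v, (u, v) ∈ N ∧ T = {Fin.last 16, u.castSucc, v.castSucc} := by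
  simp [extend17, eq_comm]

theorem cs_mem (S : Finset (Fin 16)) (u : Fin 16) :
    u.castSucc ∈ S.image Fin.castSucc ↔ u ∈ S := by simp

theorem last_notMem (S : Finset (Fin 16)) : Fin.last 16 ∉ S.image Fin.castSucc := by
  intro h
  obtain ⟨y, _, hy⟩ := Finset.mem_image.1 h
  exact Fin.castSucc_ne_last y hy

theorem extend17_pts (C : Finset (Finset (Fin 16))) (hC : isPTS C) (N : Finset (Fin 16 × Fin 16))
    (hN : ∀ u v, (u, v) ∈ N → v ∈ nbr C u) (hsym : ∀ u v, (u, v) ∈ N → (v, u) ∈ N)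
    (hf : ∀ u v v', (u, v) ∈ N → (u, v') ∈ N → v = v') : isPTS (extend17 C N) := by
  obtain ⟨h3, h⟩ := (pts_iff C).1 hC
  have hne : ∀ u v, (u, v) ∈ N → u ≠ v := fun u v e => ((mem_nbr _ _ _).1 (hN u v e)).1.symm
  have hcov : ∀ u v, (u, v) ∈ N → ∀ S ∈ C, u ∈ S → v ∉ S :=
    fun u v e => ((mem_nbr _ _ _).1 (hN u v e)).2
  rw [pts_iff]
  constructor
  · intro T hT
    rcases (mem_extend17 _ _ _).1 hT with ⟨S, hS, rfl⟩ | ⟨u, v, e, rfl⟩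
    · rw [Finset.card_image_of_injective _ (Fin.castSucc_injective 16), h3 S hS]
    · refine Finset.card_eq_three.2 ⟨_, _, _, ?_, ?_, ?_, rfl⟩
      · exact (Fin.castSucc_ne_last _).symm
      · exact (Fin.castSucc_ne_last _).symm
      · exact fun e' => hne u v e (Fin.castSucc_injective 16 e')
  · have mixed : ∀ s t : Fin 17, s ≠ t → ∀ S ∈ C, ∀ u v, (u, v) ∈ N →
        s ∈ S.image Fin.castSucc → t ∈ S.image Fin.castSucc →
        s ∈ ({Fin.last 16, u.castSucc, v.castSucc} : Finset (Fin 17)) →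
        t ∈ ({Fin.last 16, u.castSucc, v.castSucc} : Finset (Fin 17)) → False := by
      intro s t hst S hS u v e a b c d
      simp only [Finset.mem_insert, Finset.mem_singleton] at c d
      have hc := hcov u v e S hS
      rcases c with rfl | rfl | rfl
      · exact last_notMem _ a
      · rcases d with rfl | rfl | rfl
        · exact last_notMem _ b
        · exact hst rfl
        · exact hc ((cs_mem _ _).1 a) ((cs_mem _ _).1 b)
      · rcases d with rfl | rfl | rfl
        · exact last_notMem _ b
        · exact hc ((cs_mem _ _).1 b) ((cs_mem _ _).1 a)
        · exact hst rfl
    intro s t hst T₁ h₁ T₂ h₂ a b c d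
    rcases (mem_extend17 _ _ _).1 h₁ with ⟨S₁, hS₁, rfl⟩ | ⟨u, v, e, rfl⟩ <;>
      rcases (mem_extend17 _ _ _).1 h₂ with ⟨S₂, hS₂, rfl⟩ | ⟨u', v', e', rfl⟩
    · obtain ⟨s, hs, rfl⟩ := Finset.mem_image.1 a
      obtain ⟨t, ht, rfl⟩ := Finset.mem_image.1 b
      rw [cs_mem] at c d
      rw [h s t (fun e => hst (by rw [e])) S₁ hS₁ S₂ hS₂ hs ht c d]
    · exact (mixed s t hst S₁ hS₁ u' v' e' a b c d).elim
    · exact (mixed s t hst S₂ hS₂ u v e c d a b).elim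
    · have fin : ∀ y : Fin 16, y.castSucc ∈ ({Fin.last 16, u.castSucc, v.castSucc} : Finset (Fin 17)) →
          y.castSucc ∈ ({Fin.last 16, u'.castSucc, v'.castSucc} : Finset (Fin 17)) →
          ({Fin.last 16, u.castSucc, v.castSucc} : Finset (Fin 17)) =
            {Fin.last 16, u'.castSucc, v'.castSucc} := by
        intro y hy hy'
        simp only [Finset.mem_insert, Finset.mem_singleton, Fin.castSucc_ne_last, false_or,
          Fin.castSucc_inj] at hy hy'
        rcases hy with rfl | rfl <;> rcases hy' with rfl | rfl
        · rw [hf _ _ _ e e']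
        · rw [hf _ _ _ e (hsym _ _ e'), Finset.pair_comm]
        · rw [hf _ _ _ (hsym _ _ e) e', Finset.pair_comm]
        · rw [hf _ _ _ (hsym _ _ e) (hsym _ _ e')]
      induction s using Fin.lastCases with
      | cast s => exact fin s a c
      | last =>
        induction t using Fin.lastCases with
        | cast t => exact fin t b d
        | last => exact (hst rfl).elim

theorem nbr_extend_last (C : Finset (Finset (Fin 16))) (N : Finset (Fin 16 × Fin 16))
    (hsym : ∀ u v, (u, v) ∈ N → (v, u) ∈ N) (t : Fin 16) :
    t.castSucc ∈ nbr (extend17 C N) (Fin.last 16) ↔ ∀ v, (t, v) ∉ N := by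
  rw [mem_nbr]
  constructor
  · rintro ⟨_, h⟩ v hv
    exact h _ ((mem_extend17 _ _ _).2 (Or.inr ⟨t, v, hv, rfl⟩)) (by simp) (by simp)
  · intro h
    refine ⟨Fin.castSucc_ne_last t, fun T hT hl ht => ?_⟩
    rcases (mem_extend17 _ _ _).1 hT with ⟨S, hS, rfl⟩ | ⟨u, v, e, rfl⟩
    · exact last_notMem _ hl
    · simp only [Finset.mem_insert, Finset.mem_singleton, Fin.castSucc_ne_last, false_or,
        Fin.castSucc_inj] at ht
      rcases ht with rfl | rfl
      · exact h _ e
      · exact h _ (hsym _ _ e)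

theorem nbr_extend_cast (C : Finset (Finset (Fin 16))) (N : Finset (Fin 16 × Fin 16))
    (hsym : ∀ u v, (u, v) ∈ N → (v, u) ∈ N) (s t : Fin 16) :
    t.castSucc ∈ nbr (extend17 C N) s.castSucc ↔ t ∈ nbr C s ∧ (s, t) ∉ N := by
  rw [mem_nbr, mem_nbr]
  constructor
  · rintro ⟨hne, h⟩
    refine ⟨⟨fun e => hne (by rw [e]), fun S hS hs ht => ?_⟩, fun e => ?_⟩
    · exact h _ ((mem_extend17 _ _ _).2 (Or.inl ⟨S, hS, rfl⟩)) ((cs_mem _ _).2 hs) ((cs_mem _ _).2 ht)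
    · exact h _ ((mem_extend17 _ _ _).2 (Or.inr ⟨s, t, e, rfl⟩)) (by simp) (by simp)
  · rintro ⟨⟨hne, h⟩, hn⟩
    refine ⟨fun e => hne (Fin.castSucc_injective 16 e), fun T hT hs ht => ?_⟩
    rcases (mem_extend17 _ _ _).1 hT with ⟨S, hS, rfl⟩ | ⟨u, v, e, rfl⟩
    · exact h S hS ((cs_mem _ _).1 hs) ((cs_mem _ _).1 ht)
    · simp only [Finset.mem_insert, Finset.mem_singleton, Fin.castSucc_ne_last, false_or,
        Fin.castSucc_inj] at hs ht
      rcases hs with rfl | rfl <;> rcases ht with rfl | rfl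
      · exact hne rfl
      · exact hn e
      · exact hn (hsym _ _ e)
      · exact hne rfl

theorem delete_extend (C : Finset (Finset (Fin 16))) (N : Finset (Fin 16 × Fin 16)) :
    C.image (fun T => T.image fun y => finSuccAboveEquiv (Fin.last 16) y) =
      deletePoint (extend17 C N) (Fin.last 16) := by
  have key : ∀ S : Finset (Fin 16),
      (S.image fun y => finSuccAboveEquiv (Fin.last 16) y) =
        (S.image Fin.castSucc).subtype fun y => y ≠ Fin.last 16 := by
    intro S
    ext ⟨y, hy⟩
    simp only [Finset.mem_image, Finset.mem_subtype, Subtype.ext_iff, finSuccAboveEquiv_apply,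
      Fin.succAbove_last]
  ext T
  simp only [deletePoint, Finset.mem_image, Finset.mem_filter, mem_extend17, key]
  constructor
  · rintro ⟨S, hS, rfl⟩
    exact ⟨_, ⟨Or.inl ⟨S, hS, rfl⟩, last_notMem S⟩, rfl⟩
  · rintro ⟨T', ⟨⟨S, hS, rfl⟩ | ⟨u, v, e, rfl⟩, hl⟩, rfl⟩
    · exact ⟨S, hS, rfl⟩
    · simp at hl

theorem converse16 (C : Finset (Finset (Fin 16))) (hC : isMMPTS C) :
    ∃ (B : Finset (Finset (Fin 17))) (a b c d x : Fin 17)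
        (φ : Fin 16 ≃ {y : Fin 17 // y ≠ x}),
        isMMPTS B ∧
        (a ≠ b ∧ a ≠ c ∧ a ≠ d ∧ b ≠ c ∧ b ≠ d ∧ c ≠ d) ∧
        leave B = {{a, b}, {b, c}, {c, d}, {d, a}} ∧
        x ∈ ({a, b, c, d} : Set (Fin 17)) ∧
        C.image (fun T => T.image fun y => φ y) = deletePoint B x := by
  obtain ⟨w, p, q, r, hpq, hpr, hqr, hw, hy⟩ := leave16 C hC
  have hmw : ∀ z, z ∈ nbr C w ↔ z = p ∨ z = q ∨ z = r := by intro z; rw [hw]; simp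
  have hpw : p ≠ w := ((mem_nbr _ _ _).1 ((hmw p).2 (by simp))).1
  have hqw : q ≠ w := ((mem_nbr _ _ _).1 ((hmw q).2 (by simp))).1
  have hrw : r ≠ w := ((mem_nbr _ _ _).1 ((hmw r).2 (by simp))).1
  have huniq : ∀ y, y ≠ w → ∀ z z', z ∈ nbr C y → z' ∈ nbr C y → z = z' := by
    intro y hyw z z' h h'
    obtain ⟨t, ht⟩ := hy y hyw
    rw [ht, Finset.mem_singleton] at h h'
    rw [h, h']
  have hq : w ∈ nbr C q := nbr_symm _ _ _ ((hmw q).2 (by simp))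
  have hr : w ∈ nbr C r := nbr_symm _ _ _ ((hmw r).2 (by simp))
  let N : Finset (Fin 16 × Fin 16) := Finset.univ.filter fun e =>
    e.2 ∈ nbr C e.1 ∧ e.1 ≠ q ∧ e.1 ≠ r ∧ e.2 ≠ q ∧ e.2 ≠ r
  have hN : ∀ u v, (u, v) ∈ N ↔ v ∈ nbr C u ∧ u ≠ q ∧ u ≠ r ∧ v ≠ q ∧ v ≠ r := by
    intro u v; simp [N]
  have hsym : ∀ u v, (u, v) ∈ N → (v, u) ∈ N := by
    intro u v h
    rw [hN] at *
    exact ⟨nbr_symm _ _ _ h.1, h.2.2.2.1, h.2.2.2.2, h.2.1, h.2.2.1⟩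
  have hf : ∀ u v v', (u, v) ∈ N → (u, v') ∈ N → v = v' := by
    intro u v v' h h'
    rw [hN] at h h'
    by_cases hu : u = w
    · subst hu
      have := (hmw v).1 h.1
      have := (hmw v').1 h'.1
      grind
    · exact huniq u hu v v' h.1 h'.1
  have hpts := extend17_pts C hC.1 N (fun u v h => ((hN u v).1 h).1) hsym hf
  have hlast : ∀ t, (∀ v, (t, v) ∉ N) ↔ t = q ∨ t = r := by
    intro t
    constructor
    · intro h
      by_contra! hne
      by_cases ht : t = w
      · exact h p ((hN _ _).2 ⟨ht ▸ (hmw p).2 (by simp), hne.1, hne.2, hpq, hpr⟩)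
      · obtain ⟨z, hz⟩ := hy t ht
        have hz' : z ∈ nbr C t := by simp [hz]
        refine h z ((hN _ _).2 ⟨hz', hne.1, hne.2, ?_, ?_⟩)
        · rintro rfl
          exact ht (huniq z hqw _ _ (nbr_symm _ _ _ hz') hq)
        · rintro rfl
          exact ht (huniq z hrw _ _ (nbr_symm _ _ _ hz') hr)
    · intro h v hv
      have := (hN _ _).1 hv
      tauto
  have hcast : ∀ s t, (t ∈ nbr C s ∧ (s, t) ∉ N) ↔
      (s = w ∧ (t = q ∨ t = r)) ∨ (t = w ∧ (s = q ∨ s = r)) := by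
    intro s t
    constructor
    · rintro ⟨h, hn⟩
      have h' := nbr_symm _ _ _ h
      have : s = q ∨ s = r ∨ t = q ∨ t = r := by
        by_contra! hh
        exact hn ((hN _ _).2 ⟨h, hh⟩)
      rcases this with rfl | rfl | rfl | rfl
      · exact Or.inr ⟨huniq _ hqw _ _ h hq, by simp⟩
      · exact Or.inr ⟨huniq _ hrw _ _ h hr, by simp⟩
      · exact Or.inl ⟨huniq _ hqw _ _ h' hq, by simp⟩
      · exact Or.inl ⟨huniq _ hrw _ _ h' hr, by simp⟩
    · rintro (⟨rfl, rfl | rfl⟩ | ⟨rfl, rfl | rfl⟩)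
      · exact ⟨nbr_symm _ _ _ hq, fun e => ((hN _ _).1 e).2.2.2.1 rfl⟩
      · exact ⟨nbr_symm _ _ _ hr, fun e => ((hN _ _).1 e).2.2.2.2 rfl⟩
      · exact ⟨hq, fun e => ((hN _ _).1 e).2.1 rfl⟩
      · exact ⟨hr, fun e => ((hN _ _).1 e).2.2.1 rfl⟩
  have inj : ∀ {a b : Fin 16}, a ≠ b → a.castSucc ≠ b.castSucc :=
    fun h e => h (Fin.castSucc_injective 16 e)
  have nl : ∀ a : Fin 16, Fin.last 16 ≠ a.castSucc := fun a => (Fin.castSucc_ne_last a).symm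
  have hleave : leave (extend17 C N) = {{Fin.last 16, q.castSucc}, {q.castSucc, w.castSucc},
      {w.castSucc, r.castSucc}, {r.castSucc, Fin.last 16}} := by
    have hlst : ∀ t : Fin 16, ({Fin.last 16, t.castSucc} : Finset (Fin 17)) ∈ leave (extend17 C N) ↔
        t = q ∨ t = r := by
      intro t
      rw [← hlast, ← nbr_extend_last C N hsym, mem_nbr_leave]
      exact ⟨fun h => ⟨Fin.castSucc_ne_last t, h⟩, fun h => h.2⟩
    have hcst : ∀ s t : Fin 16, s ≠ t →
        (({s.castSucc, t.castSucc} : Finset (Fin 17)) ∈ leave (extend17 C N) ↔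
        (s = w ∧ (t = q ∨ t = r)) ∨ (t = w ∧ (s = q ∨ s = r))) := by
      intro s t hst
      rw [← hcast, ← nbr_extend_cast C N hsym, mem_nbr_leave]
      simp [hst.symm]
    ext P
    simp only [Set.mem_insert_iff, Set.mem_singleton_iff]
    constructor
    · intro hP
      obtain ⟨s, t, hst, rfl⟩ := Finset.card_eq_two.1 hP.1
      induction s using Fin.lastCases with
      | last =>
        induction t using Fin.lastCases with
        | last => exact (hst rfl).elim
        | cast t =>
          rcases (hlst t).1 hP with rfl | rfl
          · simp
          · simp [Finset.pair_comm]
      | cast s =>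
        induction t using Fin.lastCases with
        | last =>
          rw [Finset.pair_comm] at hP
          rcases (hlst s).1 hP with rfl | rfl
          · simp [Finset.pair_comm]
          · simp
        | cast t =>
          rcases (hcst s t (fun e => hst (by rw [e]))).1 hP with
            ⟨rfl, rfl | rfl⟩ | ⟨rfl, rfl | rfl⟩
          · exact Or.inr (Or.inl (Finset.pair_comm _ _))
          · simp
          · simp
          · exact Or.inr (Or.inr (Or.inl (Finset.pair_comm _ _)))
    · rintro (rfl | rfl | rfl | rfl)
      · exact (hlst q).2 (by simp)
      · exact (hcst q w hqw).2 (by simp)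
      · exact (hcst w r hrw.symm).2 (by simp)
      · rw [Finset.pair_comm]; exact (hlst r).2 (by simp)
  refine ⟨extend17 C N, Fin.last 16, q.castSucc, w.castSucc, r.castSucc, Fin.last 16,
    finSuccAboveEquiv (Fin.last 16), ?_, ?_, hleave, by simp, delete_extend C N⟩
  · exact mm_of_cycle _ hpts (by simp) _ _ _ _ (nl _) (nl _) (nl _) (inj hqw) (inj hqr)
      (inj hrw.symm) hleave
  · exact ⟨nl _, nl _, nl _, inj hqw, inj hqr, inj hrw.symm⟩

theorem mmpts17_delete_point_mmpts16 :
    (∀ (B : Finset (Finset (Fin 17))) (a b c d x : Fin 17),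
      isMMPTS B →
      a ≠ b → a ≠ c → a ≠ d → b ≠ c → b ≠ d → c ≠ d →
      leave B = {{a, b}, {b, c}, {c, d}, {d, a}} →
      x ∈ ({a, b, c, d} : Set (Fin 17)) →
      isMMPTS (deletePoint B x)) ∧
    (∀ C : Finset (Finset (Fin 16)), isMMPTS C →
      ∃ (B : Finset (Finset (Fin 17))) (a b c d x : Fin 17)
        (φ : Fin 16 ≃ {y : Fin 17 // y ≠ x}),
        isMMPTS B ∧
        (a ≠ b ∧ a ≠ c ∧ a ≠ d ∧ b ≠ c ∧ b ≠ d ∧ c ≠ d) ∧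
        leave B = {{a, b}, {b, c}, {c, d}, {d, a}} ∧
        x ∈ ({a, b, c, d} : Set (Fin 17)) ∧
        C.image (fun T => T.image fun y => φ y) = deletePoint B x) := by
  refine ⟨fun B a b c d x hB hab hac had hbc hbd hcd hl hx => ?_, converse16⟩
  obtain ⟨h44, h2⟩ := cycle_facts B hB.1 (by simp) a b c d hab hac had hbc hbd hcd hl
  have hx2 := h2 x (by simpa using hx)
  have hr := rep_nbr B hB.1 x
  obtain ⟨hp, hc⟩ := deletePoint_pts B hB.1 x
  simp only [Fintype.card_fin] at hr
  refine ⟨hp, fun B' hB' => ?_⟩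
  have := bound16 B' hB' (by simp)
  omega
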